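/- arXiv:2602.22838 — 2 statements merged into one kernel-verified Lean document; each statement's English description precedes it below -/
import Mathlib

section
/- Assume n−2 is divisible by m−1. Then for every integer k with 0 ≤ k < (m−2)(n−2)/(m−1) + 1, the Maximin social choice correspondence is not k-augmentation strategyproof: there exist a profile with n voters, a voter i, a manipulation, and a tie-breaker under which the manipulation yields a strictly better outcome for voter i than adding k truthful copies of her vote. Consequently Φ(Maximin) ≥ (m−2)(n−2)/(m−1) + 1. -/
/-!
Besides the manipulator, take one voter with the identity order `0 ≻ 1 ≻ ⋯ ≻ m - 1` and
`q = (n - 2) / (m - 1)` copies of every rotation of that order except `1 ≻ 2 ≻ ⋯ ≻ m - 1 ≻ 0`.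
In this incomplete Condorcet cycle every candidate loses worst to its cyclic predecessor: by
`q (m - 3)`, but candidate `1` by `q (m - 1)`.

The manipulator's preference is `1 ≻ 2 ≻ 0 ≻ 3 ≻ ⋯`. A truthful copy of it helps `1` against `0`
and hurts every other `c ≠ 0` against `c - 1`, so `0` stays a winner until `1` overtakes it, which
takes more than `q (m - 2)` copies. Voting `2 ≻ 3 ≻ ⋯ ≻ 0 ≻ 1` instead lets `2` tie with `0` at
`-q (m - 3)`. With the latter order also serving as the tie-breaker, `2` wins after the
manipulation, but `0` wins after the truthful augmentation, even when it is tied with `1`.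
-/

open Finset

/-- A strict linear preference order over `m` candidates, encoded as the permutation sending
each candidate to its rank; rank `0` is the most preferred position, so
`c ≻ c'` iff `p c < p c'`. -/
abbrev Pref (m : ℕ) := Equiv.Perm (Fin m)

/-- A profile of `N` voters, each with a strict preference over `m` candidates. -/
abbrev Profile (m N : ℕ) := Fin N → Pref m

/-- A social choice correspondence: for each number `N` of voters, it maps each `N`-voter
profile to a set of (tied) winners. -/
abbrev SCC (m : ℕ) := (N : ℕ) → Profile m N → Finset (Fin m)

/-- The profile `P` with `k` extra copies of voter `i`'s preference appended. -/
def addCopies {m n : ℕ} (P : Profile m n) (i : Fin n) (k : ℕ) : Profile m (n + k) :=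
  fun j => if h : (j : ℕ) < n then P ⟨j, h⟩ else P i

/-- Break a tie among the candidates in `A` using the linear tie-breaking order `τ`:
the winner is the `τ`-maximal (lowest `τ`-rank) element of `A`. -/
noncomputable def tiebreak {m : ℕ} [NeZero m] (τ : Pref m) (A : Finset (Fin m)) : Fin m :=
  if h : A.Nonempty then τ.symm ((A.image (fun c => τ c)).min' (h.image _)) else 0

/-- `F` is `k`-augmentation strategyproof on `n`-voter profiles: for every tie-breaker `τ`,
profile `P`, voter `i`, and alternative preference `q`, voter `i` weakly prefers the outcome
obtained by adding `k` truthful copies of her vote to the outcome of the manipulation `q`. -/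
def kASP (m n : ℕ) [NeZero m] (F : SCC m) (k : ℕ) : Prop :=
  ∀ (τ : Pref m) (P : Profile m n) (i : Fin n) (q : Pref m),
    (P i) (tiebreak τ (F (n + k) (addCopies P i k))) ≤
      (P i) (tiebreak τ (F n (Function.update P i q)))

/-- The manipulation potential of `F` on `n`-voter profiles: the least `k` such that `F` is
`k'`-augmentation strategyproof for all `k' ≥ k`, and `⊤` (i.e. `∞`) if no such `k` exists. -/
noncomputable def manipPot (m n : ℕ) [NeZero m] (F : SCC m) : ℕ∞ :=
  sInf ((fun k : ℕ => (k : ℕ∞)) '' {k : ℕ | ∀ k' : ℕ, k ≤ k' → kASP m n F k'})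

/-- The margin of `c` against `d`: the number of voters preferring `c` to `d` minus the
number of voters preferring `d` to `c`. -/
def margin {m N : ℕ} (P : Profile m N) (c d : Fin m) : ℤ :=
  ((Finset.univ.filter (fun i => P i c < P i d)).card : ℤ) -
    ((Finset.univ.filter (fun i => P i d < P i c)).card : ℤ)

/-- Maximin score: the worst margin of `c` against any other candidate. -/
def maximinScore {m N : ℕ} (P : Profile m N) (c : Fin m) : ℤ :=
  if h : (Finset.univ.erase c).Nonempty then
    (Finset.univ.erase c).inf' h (fun d => margin P c d)
  else 0

/-- Maximin: the winners are the candidates with maximal maximin score. -/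
def maximin (m : ℕ) : SCC m := fun _ P =>
  Finset.univ.filter (fun c => ∀ c', maximinScore P c' ≤ maximinScore P c)

section Margins

variable {m N : ℕ}

/-- The contribution of a single voter with preference `p` to the margin of `c` against `d`:
`1` if she prefers `c`, `-1` if she prefers `d`, and `0` if `c = d`. -/
def netVote (p : Pref m) (c d : Fin m) : ℤ :=
  (if p c < p d then 1 else 0) - (if p d < p c then 1 else 0)

lemma netVote_of_ne (p : Pref m) {c d : Fin m} (h : c ≠ d) :
    netVote p c d = if p c < p d then 1 else -1 := by
  rcases (p.injective.ne h).lt_or_gt with hlt | hgt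
  · simp [netVote, hlt, hlt.le]
  · simp [netVote, hgt, hgt.not_gt]

lemma margin_eq_sum_netVote (P : Profile m N) (c d : Fin m) :
    margin P c d = ∑ i, netVote (P i) c d := by
  simp [margin, netVote, sum_sub_distrib]

lemma margin_swap (P : Profile m N) (c d : Fin m) : margin P c d = -margin P d c :=
  (neg_sub _ _).symm

lemma margin_cons (p : Pref m) (P : Profile m N) (c d : Fin m) :
    margin (Fin.cons p P : Profile m (N + 1)) c d = netVote p c d + margin P c d := by
  simp [margin_eq_sum_netVote, Fin.sum_univ_succ]

lemma margin_addCopies (P : Profile m N) (i : Fin N) (k : ℕ) (c d : Fin m) :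
    margin (addCopies P i k) c d = margin P c d + k * netVote (P i) c d := by
  simp [margin_eq_sum_netVote, Fin.sum_univ_add, addCopies]

end Margins

section Winners

variable {m N : ℕ}

lemma maximinScore_le_margin (P : Profile m N) {c d : Fin m} (h : d ≠ c) :
    maximinScore P c ≤ margin P c d := by
  have hd : d ∈ univ.erase c := mem_erase.2 ⟨h, mem_univ d⟩
  rw [maximinScore, dif_pos ⟨d, hd⟩]
  exact inf'_le _ hd

lemma le_maximinScore_iff [Nontrivial (Fin m)] {P : Profile m N} {c : Fin m} {a : ℤ} :
    a ≤ maximinScore P c ↔ ∀ d ≠ c, a ≤ margin P c d := by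
  have hne : (univ.erase c).Nonempty :=
    (exists_ne c).imp fun d hd => mem_erase.2 ⟨hd, mem_univ d⟩
  simp only [maximinScore, dif_pos hne, le_inf'_iff, mem_erase, mem_univ, and_true]

lemma mem_maximin {P : Profile m N} {c : Fin m} :
    c ∈ maximin m N P ↔ ∀ d, maximinScore P d ≤ maximinScore P c := by
  simp [maximin]

lemma tiebreak_eq [NeZero m] {τ : Pref m} {A : Finset (Fin m)} {c : Fin m} (hc : c ∈ A)
    (hmin : ∀ d ∈ A, τ c ≤ τ d) : tiebreak τ A = c := by
  rw [tiebreak, dif_pos ⟨c, hc⟩, Equiv.symm_apply_eq]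
  exact le_antisymm (min'_le _ _ (mem_image_of_mem _ hc))
    (le_min' _ _ _ (forall_mem_image.2 hmin))

lemma tiebreak_maximin_eq [NeZero m] {τ : Pref m} {P : Profile m N} {c : Fin m}
    (h : ∀ d, maximinScore P d < maximinScore P c ∨
      maximinScore P d ≤ maximinScore P c ∧ τ c ≤ τ d) :
    tiebreak τ (maximin m N P) = c := by
  refine tiebreak_eq (mem_maximin.2 fun d => (h d).elim le_of_lt And.left) fun d hd => ?_
  exact ((h d).resolve_left (mem_maximin.1 hd c).not_gt).2

lemma le_manipPot_of_forall_lt_not_kASP [NeZero m] {F : SCC m} {K : ℕ}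
    (h : ∀ k < K, ¬ kASP m N F k) : (K : ℕ∞) ≤ manipPot m N F := by
  refine le_sInf ?_
  rintro _ ⟨k, hk, rfl⟩
  exact Nat.cast_le.2 (not_lt.1 fun hlt => h k hlt (hk k le_rfl))

end Winners

section Rotations

variable {m : ℕ}

/-- The rotation `s ≻ s + 1 ≻ ⋯ ≻ m - 1 ≻ 0 ≻ ⋯ ≻ s - 1` of the identity order. -/
def rotatedPref [NeZero m] (s : Fin m) : Pref m := Equiv.subRight s

lemma rotatedPref_lt_rotatedPref_iff [NeZero m] {s c d : Fin m} (h : c < d) :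
    rotatedPref s c < rotatedPref s d ↔ ¬(c < s ∧ s ≤ d) := by
  have val_of_le (e : Fin m) (he : s ≤ e) : (rotatedPref s e).val = e - s :=
    Fin.coe_sub_iff_le.2 he
  have val_of_lt (e : Fin m) (he : e < s) : (rotatedPref s e).val = m + e - s :=
    Fin.coe_sub_iff_lt.2 he
  rcases lt_or_ge c s with hc | hc <;> rcases lt_or_ge d s with hd | hd
  · rw [Fin.lt_def, val_of_lt c hc, val_of_lt d hd]
    omega
  · rw [Fin.lt_def, val_of_lt c hc, val_of_le d hd]
    omega
  · omega
  · rw [Fin.lt_def, val_of_le c hc, val_of_le d hd]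
    omega

lemma netVote_rotatedPref [NeZero m] (s : Fin m) {c d : Fin m} (h : c < d) :
    netVote (rotatedPref s) c d = if c < s ∧ s ≤ d then -1 else 1 := by
  simp only [netVote_of_ne _ h.ne, rotatedPref_lt_rotatedPref_iff h, ite_not]

lemma sum_netVote_rotatedPref [NeZero m] {c d : Fin m} (h : c < d) :
    ∑ s, netVote (rotatedPref s) c d = m - 2 * ((d : ℤ) - c) := by
  calc ∑ s, netVote (rotatedPref s) c d
      = ∑ s : Fin m, (1 - 2 * if s ∈ Ioc c d then (1 : ℤ) else 0) := by
        refine sum_congr rfl fun s _ => ?_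
        simp only [netVote_rotatedPref s h, mem_Ioc]
        split_ifs <;> rfl
    _ = m - 2 * #(Ioc c d) := by
        simp only [sum_sub_distrib, ← mul_sum, sum_const, sum_boole, filter_univ_mem, card_univ,
          Fintype.card_fin, nsmul_one]
    _ = m - 2 * ((d : ℤ) - c) := by rw [Fin.card_Ioc, Nat.cast_sub (Fin.le_def.1 h.le)]

/-- The Condorcet cycle with one ballot type missing: `q` copies of each rotation of the
identity order other than `rotatedPref s`. Voters are grouped into `m` blocks of `q`
equal ballots. -/
def cycleOmitting (s : Fin (m + 1)) (q : ℕ) : Profile (m + 1) (m * q) :=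
  fun j => rotatedPref (s.succAbove (finProdFinEquiv.symm j).1)

lemma margin_cycleOmitting (s : Fin (m + 1)) (q : ℕ) {c d : Fin (m + 1)} (h : c < d) :
    margin (cycleOmitting s q) c d =
      q * (m + 1 - 2 * ((d : ℤ) - c) - netVote (rotatedPref s) c d) := by
  have hcycle := sum_netVote_rotatedPref h
  rw [Fin.sum_univ_succAbove _ s] at hcycle
  calc margin (cycleOmitting s q) c d
      = ∑ x : Fin m × Fin q, netVote (rotatedPref (s.succAbove x.1)) c d := by
        rw [margin_eq_sum_netVote]
        exact Equiv.sum_comp finProdFinEquiv.symm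
          fun x => netVote (rotatedPref (s.succAbove x.1)) c d
    _ = q * ∑ r, netVote (rotatedPref (s.succAbove r)) c d := by
        simp [Fintype.sum_prod_type, mul_sum]
    _ = q * (m + 1 - 2 * ((d : ℤ) - c) - netVote (rotatedPref s) c d) := by
        rw [eq_sub_of_add_eq' hcycle, Nat.cast_add_one]

-- As a preference, `r.cycleRange.symm` moves candidate `0` down to rank `r`.
lemma cycleRange_symm_lt_cycleRange_symm_iff {r c d : Fin (m + 1)} (h : c < d) :
    r.cycleRange.symm c < r.cycleRange.symm d ↔ ¬(c = 0 ∧ d ≤ r) := by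
  obtain ⟨b, rfl⟩ := Fin.exists_succ_eq.2 (Fin.ne_zero_of_lt h)
  rw [Fin.cycleRange_symm_succ]
  induction c using Fin.cases with
  | zero =>
    rw [Fin.cycleRange_symm_zero, Fin.lt_succAbove_iff_le_castSucc, ← not_lt,
      Fin.castSucc_lt_iff_succ_le]
    simp only [true_and]
  | succ a =>
    rw [Fin.cycleRange_symm_succ, (Fin.strictMono_succAbove r).lt_iff_lt]
    simp only [Fin.succ_ne_zero, false_and, not_false_eq_true, iff_true]
    exact Fin.succ_lt_succ_iff.1 h

lemma netVote_cycleRange_symm (r : Fin (m + 1)) {c d : Fin (m + 1)} (h : c < d) :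
    netVote r.cycleRange.symm c d = if c = 0 ∧ d ≤ r then -1 else 1 := by
  simp only [netVote_of_ne _ h.ne, cycleRange_symm_lt_cycleRange_symm_iff h, ite_not]

end Rotations

section Construction

variable {l q k : ℕ}

/-- The manipulator's true preference `1 ≻ 2 ≻ 0 ≻ 3 ≻ ⋯`, for `m = l + 3` candidates. -/
def sincerePref (l : ℕ) : Pref (l + 3) := (Fin.cycleRange 2).symm

/-- The profile in which the manipulator, voter `0`, reports `p`, for `m = l + 3` and
`n = (m - 1) q + 2`. -/
def reportedProfile (q : ℕ) (p : Pref (l + 3)) : Profile (l + 3) ((l + 2) * q + 2) :=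
  Fin.cons p (Fin.cons (Equiv.refl _) (cycleOmitting 1 q))

lemma margin_reportedProfile (p : Pref (l + 3)) {c d : Fin (l + 3)} (h : c < d) :
    margin (reportedProfile q p) c d =
      netVote p c d + 1 + q * (l + 3 - 2 * ((d : ℤ) - c) - if c = 0 then -1 else 1) := by
  have hone : c < 1 ∧ 1 ≤ d ↔ c = 0 := by
    rw [Fin.lt_one_iff, and_iff_left_iff_imp]
    rintro rfl
    exact Fin.one_le_of_ne_zero h.ne'
  have hrefl : netVote (Equiv.refl _) c d = 1 := by rw [netVote_of_ne _ h.ne]; exact if_pos h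
  rw [reportedProfile, margin_cons, margin_cons, hrefl, margin_cycleOmitting 1 q h,
    netVote_rotatedPref 1 h]
  simp only [hone]
  push_cast
  ring

/-- The profile with `k` truthful copies of the manipulator's preference appended. -/
def augmentedProfile (l q k : ℕ) : Profile (l + 3) ((l + 2) * q + 2 + k) :=
  addCopies (reportedProfile q (sincerePref l)) 0 k

lemma margin_augmentedProfile {c d : Fin (l + 3)} (h : c < d) :
    margin (augmentedProfile l q k) c d = (k + 1) * (if c = 0 ∧ d ≤ 2 then -1 else 1) + 1 +
      q * (l + 3 - 2 * ((d : ℤ) - c) - if c = 0 then -1 else 1) := by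
  have hvoter : reportedProfile q (sincerePref l) 0 = sincerePref l := rfl
  rw [augmentedProfile, margin_addCopies, hvoter, margin_reportedProfile _ h, sincerePref,
    netVote_cycleRange_symm 2 h]
  ring

lemma le_maximinScore_augmentedProfile_zero (l q k : ℕ) :
    min (k + 2 - q * l : ℤ) (q * l - k) ≤ maximinScore (augmentedProfile l q k) 0 := by
  rw [le_maximinScore_iff]
  intro d hd
  rw [margin_augmentedProfile (Fin.pos_of_ne_zero hd)]
  simp only [true_and, if_true, Fin.val_zero]
  rcases le_or_gt d 2 with hd2 | hd2
  · have hqd : (q * d : ℤ) ≤ q * 2 := by gcongr; exact_mod_cast hd2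
    rw [if_pos hd2]
    exact min_le_of_right_le (by push_cast; linarith)
  · have hqd : (q * d : ℤ) ≤ q * (l + 2) := by gcongr; exact_mod_cast d.is_le
    rw [if_neg hd2.not_ge]
    exact min_le_of_left_le (by push_cast; linarith)

lemma maximinScore_augmentedProfile_one_le :
    maximinScore (augmentedProfile l q k) 1 ≤ k - q * (l + 2) := by
  refine (maximinScore_le_margin _ zero_ne_one).trans_eq ?_
  rw [margin_swap, margin_augmentedProfile Fin.zero_lt_one,
    if_pos ⟨rfl, Fin.le_def.2 one_le_two⟩, if_pos rfl]
  simp only [Fin.val_zero, Fin.val_one]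
  push_cast
  ring

lemma maximinScore_augmentedProfile_succ_le {b : Fin (l + 2)} (hb : b ≠ 0) :
    maximinScore (augmentedProfile l q k) b.succ ≤ -(q * l + k + 2) := by
  refine (maximinScore_le_margin _ Fin.castSucc_lt_succ.ne).trans_eq ?_
  have hb' : b.castSucc ≠ 0 := Fin.castSucc_ne_zero_iff.2 hb
  rw [margin_swap, margin_augmentedProfile Fin.castSucc_lt_succ, if_neg fun h => hb' h.1,
    if_neg hb']
  simp only [Fin.val_castSucc, Fin.val_succ]
  push_cast
  ring

lemma tiebreak_maximin_augmentedProfile (hk : k ≤ (l + 1) * q) :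
    tiebreak (rotatedPref 2) (maximin (l + 3) _ (augmentedProfile l q k)) = 0 := by
  have hzero := le_maximinScore_augmentedProfile_zero l q k
  zify at hk
  have hql : (0 : ℤ) ≤ q * l := by positivity
  refine tiebreak_maximin_eq fun d => ?_
  induction d using Fin.cases with
  | zero => exact Or.inr ⟨le_rfl, le_rfl⟩
  | succ b =>
    rcases eq_or_ne b 0 with rfl | hb
    · refine Or.inr ⟨maximinScore_augmentedProfile_one_le.trans (le_trans ?_ hzero), ?_⟩
      · exact le_min (by linarith) (by linarith)
      · refine ((rotatedPref_lt_rotatedPref_iff Fin.zero_lt_one).2 fun h => ?_).le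
        exact absurd (Fin.le_def.1 h.2) Nat.one_lt_two.not_ge
    · refine Or.inl
        ((maximinScore_augmentedProfile_succ_le hb).trans_lt (lt_of_lt_of_le ?_ hzero))
      exact lt_min (by linarith) (by linarith)

lemma margin_reportedProfile_rotatedPref_two {c d : Fin (l + 3)} (h : c < d) :
    margin (reportedProfile q (rotatedPref 2)) c d =
      (if c < 2 ∧ 2 ≤ d then -1 else 1) + 1 +
        q * (l + 3 - 2 * ((d : ℤ) - c) - if c = 0 then -1 else 1) := by
  rw [margin_reportedProfile _ h, netVote_rotatedPref 2 h]

lemma le_maximinScore_reportedProfile_two :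
    -(q * l : ℤ) ≤ maximinScore (reportedProfile q (rotatedPref 2)) (2 : Fin (l + 3)) := by
  rw [le_maximinScore_iff]
  intro d hd
  rcases lt_or_gt_of_ne hd with hd | hd
  · rw [margin_swap, margin_reportedProfile_rotatedPref_two hd, if_pos ⟨hd, le_rfl⟩]
    have hqd : (q * d : ℤ) ≤ q * 1 := by gcongr; exact_mod_cast Nat.lt_succ_iff.1 hd
    split_ifs with hd0
    · rw [hd0, Fin.val_zero, Fin.val_two]
      push_cast
      linarith
    · rw [Fin.val_two]
      push_cast
      linarith
  · have hqd : (q * d : ℤ) ≤ q * (l + 2) := by gcongr; exact_mod_cast d.is_le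
    have hpos : (0 : Fin (l + 3)) < 2 := Fin.lt_def.2 zero_lt_two
    rw [margin_reportedProfile_rotatedPref_two hd, if_neg fun h => h.1.false,
      if_neg hpos.ne', Fin.val_two]
    push_cast
    linarith

lemma maximinScore_reportedProfile_le (c : Fin (l + 3)) :
    maximinScore (reportedProfile q (rotatedPref 2)) c ≤ -(q * l) := by
  induction c using Fin.cases with
  | zero =>
    refine (maximinScore_le_margin _ Fin.last_pos.ne').trans_eq ?_
    rw [margin_reportedProfile_rotatedPref_two Fin.last_pos, if_pos rfl,
      if_pos ⟨Fin.lt_def.2 zero_lt_two, Fin.le_last _⟩]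
    simp only [Fin.val_zero, Fin.val_last]
    push_cast
    ring
  | succ b =>
    refine (maximinScore_le_margin _ Fin.castSucc_lt_succ.ne).trans ?_
    rw [margin_swap, margin_reportedProfile_rotatedPref_two Fin.castSucc_lt_succ]
    simp only [Fin.val_castSucc, Fin.val_succ]
    push_cast
    split_ifs <;> linarith

lemma tiebreak_maximin_reportedProfile :
    tiebreak (rotatedPref 2) (maximin (l + 3) _ (reportedProfile q (rotatedPref 2))) = 2 := by
  refine tiebreak_maximin_eq fun d => Or.inr
    ⟨(maximinScore_reportedProfile_le d).trans le_maximinScore_reportedProfile_two, ?_⟩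
  simp [rotatedPref]

lemma sincerePref_two_lt_zero : sincerePref l 2 < sincerePref l 0 := by
  have hlt : (0 : Fin (l + 3)) < 2 := Fin.lt_def.2 zero_lt_two
  refine (not_lt.1 fun h => ?_).lt_of_ne ((sincerePref l).injective.ne hlt.ne')
  exact (cycleRange_symm_lt_cycleRange_symm_iff hlt).1 h ⟨rfl, le_rfl⟩

lemma not_kASP_maximin (hk : k ≤ (l + 1) * q) :
    ¬ kASP (l + 3) ((l + 2) * q + 2) (maximin (l + 3)) k := by
  intro hASP
  have hle : sincerePref l 0 ≤ sincerePref l 2 := by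
    have hmanip : Function.update (reportedProfile q (sincerePref l)) 0 (rotatedPref 2) =
        reportedProfile q (rotatedPref 2) := Fin.update_cons_zero ..
    have hle := hASP (rotatedPref 2) (reportedProfile q (sincerePref l)) 0 (rotatedPref 2)
    rwa [hmanip, tiebreak_maximin_reportedProfile, ← augmentedProfile,
      tiebreak_maximin_augmentedProfile hk] at hle
  exact hle.not_gt sincerePref_two_lt_zero

end Construction

/-- If `m − 1` divides `n − 2`, then Maximin is not `k`-augmentation
strategyproof for any `0 ≤ k < (m−2)(n−2)/(m−1) + 1`; consequently
`Φ(Maximin) ≥ (m−2)(n−2)/(m−1) + 1`. -/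
theorem maximin_not_kASP_of_lt (m n : ℕ) [NeZero m] (hm : 3 ≤ m) (hn : 2 ≤ n)
    (hdvd : (m - 1) ∣ (n - 2)) :
    (∀ k : ℕ, k < (m - 2) * ((n - 2) / (m - 1)) + 1 → ¬ kASP m n (maximin m) k) ∧
      (((m - 2) * ((n - 2) / (m - 1)) + 1 : ℕ) : ℕ∞) ≤ manipPot m n (maximin m) := by
  have not_kASP : ∀ k < (m - 2) * ((n - 2) / (m - 1)) + 1, ¬ kASP m n (maximin m) k := by
    intro k hk
    obtain ⟨l, rfl⟩ := Nat.exists_eq_add_of_le' hm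
    obtain ⟨q, hq⟩ := hdvd
    obtain rfl : n = (l + 2) * q + 2 := Nat.eq_add_of_sub_eq hn hq
    rw [hq, Nat.mul_div_cancel_left q (show 0 < l + 3 - 1 from Nat.succ_pos _)] at hk
    exact not_kASP_maximin (Nat.lt_succ_iff.1 hk)
  exact ⟨not_kASP, le_manipPot_of_forall_lt_not_kASP not_kASP⟩
end

section
/- For every integer k ≥ 0, the Omninomination social choice correspondence is not k-augmentation strategyproof: there exist a profile, a voter i, a manipulation ≻'_i, and a tie-breaker τ such that Omni_τ(≻'_i, ≻_{−i}) ≻_i Omni_τ(≻ + k(≻_i)). Consequently the manipulation potential of the Omninomination rule is ∞. -/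
open Finset

/-- Omninomination: all candidates ranked first by at least one voter. -/
def omniRule (m : ℕ) [NeZero m] : SCC m := fun _ P =>
  Finset.univ.filter (fun c => ∃ i, P i c = 0)

/-!
Extra copies of a vote create no new top candidate, so Omninomination ignores augmentation and it
is enough to manipulate it in the ordinary sense. A voter can add any candidate `a` to the winners
by ranking it first, and `a` then wins if the tie-breaker prefers it to every truthful winner. With
tie-breaker `0 ≻ 1 ≻ 2 ≻ ⋯`, a voter whose preference is `last ≻ 0 ≻ 1 ≻ ⋯` profits in this way
from nominating `0` if all the others nominate `1`: her own favourite loses the tie against `1`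
anyway.
-/

theorem tiebreak_eq_of_mem_of_forall_le {m : ℕ} [NeZero m] {τ : Pref m} {A : Finset (Fin m)}
    {c : Fin m} (hc : c ∈ A) (hle : ∀ d ∈ A, τ c ≤ τ d) : tiebreak τ A = c := by
  rw [tiebreak, dif_pos ⟨c, hc⟩, Equiv.symm_apply_eq, Finset.min'_eq_iff]
  exact ⟨mem_image_of_mem _ hc, forall_mem_image.2 hle⟩

theorem addCopies_eq_append {m n : ℕ} (P : Profile m n) (i : Fin n) (k : ℕ) :
    addCopies P i k = Fin.append P (fun _ => P i) := by
  funext j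
  refine Fin.addCases (fun l => ?_) (fun l => ?_) j <;> simp [addCopies]

theorem manipPot_eq_top_iff {m n : ℕ} [NeZero m] {F : SCC m} :
    manipPot m n F = ⊤ ↔ ∀ k, ∃ k' ≥ k, ¬ kASP m n F k' := by
  simp [manipPot, sInf_eq_top]

section OmniRule

variable {m n : ℕ} [NeZero m] {P : Profile m n} {i : Fin n} {q τ : Pref m} {a c : Fin m}

theorem mem_omniRule : c ∈ omniRule m n P ↔ ∃ j, P j c = 0 := by
  simp [omniRule]

theorem mem_omniRule_update :
    c ∈ omniRule m n (Function.update P i q) ↔ q c = 0 ∨ ∃ j ≠ i, P j c = 0 :=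
  mem_omniRule.trans (Function.exists_update_iff P fun _ p => p c = 0)

theorem omniRule_addCopies (P : Profile m n) (i : Fin n) (k : ℕ) :
    omniRule m (n + k) (addCopies P i k) = omniRule m n P := by
  ext c
  rw [mem_omniRule, mem_omniRule, addCopies_eq_append]
  constructor
  · rintro ⟨j, hj⟩
    induction j using Fin.addCases with
    | left j => exact ⟨j, by rwa [Fin.append_left] at hj⟩
    | right j => exact ⟨i, by rwa [Fin.append_right] at hj⟩
  · rintro ⟨j, hj⟩
    exact ⟨Fin.castAdd k j, by rwa [Fin.append_left]⟩

theorem tiebreak_omniRule_update (hq : q a = 0) (hτ : ∀ d ∈ omniRule m n P, τ a ≤ τ d) :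
    tiebreak τ (omniRule m n (Function.update P i q)) = a := by
  refine tiebreak_eq_of_mem_of_forall_le (mem_omniRule_update.2 (.inl hq)) fun d hd => ?_
  obtain hd | ⟨j, -, hj⟩ := mem_omniRule_update.1 hd
  · rw [q.injective (hd.trans hq.symm)]
  · exact hτ d (mem_omniRule.2 ⟨j, hj⟩)

theorem not_kASP_omniRule_of_lt (hτ : ∀ d ∈ omniRule m n P, τ a ≤ τ d)
    (hlt : P i a < P i (tiebreak τ (omniRule m n P))) (k : ℕ) :
    ¬ kASP m n (omniRule m) k := by
  intro hASP
  have hle := hASP τ P i (Equiv.swap 0 a)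
  rw [omniRule_addCopies, tiebreak_omniRule_update (Equiv.swap_apply_right 0 a) hτ] at hle
  exact hlt.not_ge hle

theorem not_kASP_omniRule (hm : 3 ≤ m) (hn : 2 ≤ n) (k : ℕ) :
    ¬ kASP m n (omniRule m) k := by
  obtain ⟨m, rfl⟩ := Nat.exists_eq_add_of_le' hm
  have : Nontrivial (Fin n) := Fin.nontrivial_iff_two_le.2 hn
  obtain ⟨i, j, hij⟩ := exists_pair_ne (Fin n)
  let P : Profile (m + 3) n :=
    Function.update (fun _ => Equiv.swap 0 1) i (finRotate (m + 3))
  have hwin : tiebreak 1 (omniRule (m + 3) n P) = 1 := by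
    refine tiebreak_eq_of_mem_of_forall_le
      (mem_omniRule_update.2 (.inr ⟨j, hij.symm, Equiv.swap_apply_right 0 1⟩)) fun d hd => ?_
    obtain hd | ⟨_, -, hd⟩ := mem_omniRule_update.1 hd
    · have hlast : d = Fin.last (m + 2) :=
        (finRotate (m + 3)).injective (hd.trans finRotate_last.symm)
      exact hlast ▸ Fin.le_last 1
    · exact (Equiv.swap_apply_eq_iff.1 hd).trans (Equiv.swap_apply_left 0 1) |>.ge
  have hlt : P i 0 < P i 1 := by
    have h0 : P i 0 = 1 := by simp [P]
    have h1 : P i 1 = 1 + 1 := by simp [P]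
    rw [h0, h1, Fin.lt_add_one_iff]
    simp [Fin.lt_def]
  exact not_kASP_omniRule_of_lt (τ := 1) (fun d _ => Fin.zero_le d) (hwin.symm ▸ hlt) k

end OmniRule

/-- For every `k ≥ 0`, the Omninomination rule is not `k`-augmentation
strategyproof; consequently its manipulation potential is `∞`. -/
theorem omni_manipPot_infinite (m n : ℕ) [NeZero m] (hm : 3 ≤ m) (hn : 2 ≤ n) :
    (∀ k : ℕ, ¬ kASP m n (omniRule m) k) ∧ manipPot m n (omniRule m) = ⊤ := by
  have hnot : ∀ k : ℕ, ¬ kASP m n (omniRule m) k := not_kASP_omniRule hm hn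
  exact ⟨hnot, manipPot_eq_top_iff.2 fun k => ⟨k, le_rfl, hnot k⟩⟩
end
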